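/- arXiv:2012.06111 — 4 statements merged into one kernel-verified Lean document; each statement's English description precedes it below -/
import Mathlib

section
/- Let Δ be a measurable space equipped with a probability measure P, let S be a measurable space (of states), let f : Δ → S and g : Δ → ℝ be measurable with g bounded, and let α ∈ (0,1) be a discount factor. Suppose u⁺, u⁻ : [0,∞) → [0,∞) are monotonically non-decreasing measurable functions and w⁺, w⁻ are probability weighting functions. Define, for a bounded measurable function J : S → ℝ, H(J) = ∫₀^∞ w⁺(P({δ : u⁺((g(δ) + α·J(f(δ)))₊) > z})) dz − ∫₀^∞ w⁻(P({δ : u⁻((g(δ) + α·J(f(δ)))₋) > z})) dz. Then H is monotone: if J, J' : S → ℝ are bounded measurable with J(x) ≤ J'(x) for all x ∈ S, then H(J) ≤ H(J'). -/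
open MeasureTheory Set

/-- A probability weighting function: monotonically non-decreasing, continuous,
from `[0,1]` to `[0,1]`, with `w 0 = 0` and `w 1 = 1`. -/
structure IsPWF (w : ℝ → ℝ) : Prop where
  mono : MonotoneOn w (Icc 0 1)
  cont : ContinuousOn w (Icc 0 1)
  maps : MapsTo w (Icc 0 1) (Icc 0 1)
  zero : w 0 = 0
  one : w 1 = 1

/-- The discounted CPT dynamic-programming mapping `H` at a fixed state-action
pair: disturbance distribution `P`, next-state map `f`, per-step reward `g`,
discount factor `α`, applied to a value function `J`. -/
noncomputable def Hmap {Δ S : Type*} [MeasurableSpace Δ] [MeasurableSpace S]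
    (P : Measure Δ) (wp wm up um : ℝ → ℝ) (f : Δ → S) (g : Δ → ℝ) (α : ℝ)
    (J : S → ℝ) : ℝ :=
  (∫ z in Ioi (0:ℝ), wp ((P {δ | z < up (max (g δ + α * J (f δ)) 0)}).toReal))
    - (∫ z in Ioi (0:ℝ), wm ((P {δ | z < um (-(min (g δ + α * J (f δ)) 0))}).toReal))

/-- A Choquet-type integrand `z ↦ w (P {z < X})` is monotone in the random variable `X`, hence so
is its integral: `X ≤ Y` makes every superlevel set of `X` a subset of that of `Y`, and `P` and `w`
preserve the order. -/
theorem integral_distortion_mono {Δ : Type*} [MeasurableSpace Δ]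
    (P : Measure Δ) [IsProbabilityMeasure P] {w : ℝ → ℝ} (hw : IsPWF w) {X Y : Δ → ℝ}
    (hX : IntegrableOn (fun z => w ((P {δ | z < X δ}).toReal)) (Ioi 0))
    (hY : IntegrableOn (fun z => w ((P {δ | z < Y δ}).toReal)) (Ioi 0))
    (hXY : ∀ δ, X δ ≤ Y δ) :
    (∫ z in Ioi (0:ℝ), w ((P {δ | z < X δ}).toReal))
      ≤ ∫ z in Ioi (0:ℝ), w ((P {δ | z < Y δ}).toReal) := by
  refine integral_mono hX hY fun z => ?_
  refine hw.mono ⟨ENNReal.toReal_nonneg, measureReal_le_one⟩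
    ⟨ENNReal.toReal_nonneg, measureReal_le_one⟩ ?_
  exact measureReal_mono (fun δ (h : z < X δ) => h.trans_le (hXY δ))

/-- Monotonicity of the discounted CPT Bellman mapping: if `J ≤ J'` pointwise
then `H(J) ≤ H(J')`. -/
theorem Hmap_monotone {Δ S : Type*} [MeasurableSpace Δ] [MeasurableSpace S]
    (P : Measure Δ) [IsProbabilityMeasure P]
    (f : Δ → S) (hf : Measurable f) (g : Δ → ℝ) (hg : Measurable g)
    (hgbdd : ∃ M, ∀ δ, |g δ| ≤ M)
    (α : ℝ) (hα : α ∈ Ioo (0:ℝ) 1)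
    (up um wp wm : ℝ → ℝ)
    (hupMono : MonotoneOn up (Ici 0)) (hupMaps : MapsTo up (Ici 0) (Ici 0))
    (hupMeas : Measurable up)
    (humMono : MonotoneOn um (Ici 0)) (humMaps : MapsTo um (Ici 0) (Ici 0))
    (humMeas : Measurable um)
    (hwp : IsPWF wp) (hwm : IsPWF wm)
    (J J' : S → ℝ) (hJ : Measurable J) (hJ' : Measurable J')
    (hJbdd : ∃ M, ∀ x, |J x| ≤ M) (hJ'bdd : ∃ M, ∀ x, |J' x| ≤ M)
    (hint1 : IntegrableOn
      (fun z => wp ((P {δ | z < up (max (g δ + α * J (f δ)) 0)}).toReal)) (Ioi 0))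
    (hint2 : IntegrableOn
      (fun z => wm ((P {δ | z < um (-(min (g δ + α * J (f δ)) 0))}).toReal)) (Ioi 0))
    (hint3 : IntegrableOn
      (fun z => wp ((P {δ | z < up (max (g δ + α * J' (f δ)) 0)}).toReal)) (Ioi 0))
    (hint4 : IntegrableOn
      (fun z => wm ((P {δ | z < um (-(min (g δ + α * J' (f δ)) 0))}).toReal)) (Ioi 0))
    (hle : ∀ x, J x ≤ J' x) :
    Hmap P wp wm up um f g α J ≤ Hmap P wp wm up um f g α J' := by
  have hV : ∀ δ, g δ + α * J (f δ) ≤ g δ + α * J' (f δ) := fun δ => by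
    have := mul_le_mul_of_nonneg_left (hle (f δ)) hα.1.le
    linarith
  refine sub_le_sub (integral_distortion_mono P hwp hint1 hint3 fun δ => ?_)
    (integral_distortion_mono P hwm hint4 hint2 fun δ => ?_)
  · exact hupMono (mem_Ici.2 (le_max_right _ _)) (mem_Ici.2 (le_max_right _ _))
       (max_le_max_right 0 (hV δ))
  -- The loss part is reversed: a larger value has a smaller negative part.
  · exact humMono (mem_Ici.2 (neg_nonneg.2 (min_le_right _ _)))
      (mem_Ici.2 (neg_nonneg.2 (min_le_right _ _)))
      (neg_le_neg (min_le_min_right 0 (hV δ)))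
end

section
/- Let Δ be a measurable space equipped with a probability measure P, let S be a measurable space, let f : Δ → S and g : Δ → ℝ be measurable with |g(δ)| ≤ c₀ for all δ and some constant c₀ > 0, and let α ∈ (0,1). Suppose: (1) u⁺, u⁻ : [0,∞) → [0,∞) are monotonically non-decreasing and w⁺, w⁻ are probability weighting functions; (2) u⁺, u⁻ are invertible and differentiable with u⁺(0) = u⁻(0) = 0; (3) the derivatives u⁺′, u⁻′ are monotonically non-increasing; (4) there exists β ∈ (0,1) such that for every c > 0 and every non-negative real random variable Z, ∫₀^{αc} w⁺(P(Z < z)) u⁺′(αc − z) dz + ∫₀^{αc} w⁻(P(Z > z)) u⁻′(z) dz ≤ β c. Define H(J) = ∫₀^∞ w⁺(P({δ : u⁺((g(δ) + α·J(f(δ)))₊) > z})) dz − ∫₀^∞ w⁻(P({δ : u⁻((g(δ) + α·J(f(δ)))₋) > z})) dz for bounded measurable J : S → ℝ. Then for all bounded measurable J, J' : S → ℝ, |H(J) − H(J')| ≤ β · sup_{x ∈ S} |J(x) − J'(x)|. -/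
/-!
With `X = g + α J ∘ f`, `Y = g + α J' ∘ f` and `c = sup |J - J'|`, one has `X ≤ Y + α c`. The
substitution `z = u x` (`integral_tail_comp_eq`) turns the two integrals in `Hmap` into integrals
of the distorted tails `w (P (X > x))` and `w (P (X < -x))` against the densities `u⁺'`, `u⁻'`.
Passing from `Y` to `Y + α c` translates these tails by `α c`. Because the densities are
nonincreasing, the translated parts compare favourably, and only the contribution of the window
`(0, α c]` remains (`gain_shift_le`, `loss_shift_le`). That contribution is exactly the left-hand
side of the key inequality for `Z = (-Y)₊`, hence at most `β c`. Exchanging `J` and `J'` gives the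
absolute value.
-/

open MeasureTheory Set

/-- The distorted tail `t ↦ w (P (X > t))` of a random variable `X`. -/
noncomputable def distTail {Δ : Type*} [MeasurableSpace Δ] (P : Measure Δ) (w : ℝ → ℝ)
    (X : Δ → ℝ) (t : ℝ) : ℝ :=
  w ((P {δ | t < X δ}).toReal)

section Tail

variable {Δ : Type*} [MeasurableSpace Δ] {P : Measure Δ} [IsProbabilityMeasure P] {w : ℝ → ℝ}

lemma toReal_prob_mem_Icc (s : Set Δ) : (P s).toReal ∈ Icc (0 : ℝ) 1 :=
  ⟨ENNReal.toReal_nonneg, ENNReal.toReal_le_of_le_ofReal zero_le_one (by simpa using prob_le_one)⟩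

lemma IsPWF.mono_prob (hw : IsPWF w) {s t : Set Δ} (h : s ⊆ t) :
    w (P s).toReal ≤ w (P t).toReal :=
  hw.mono (toReal_prob_mem_Icc s) (toReal_prob_mem_Icc t)
    (ENNReal.toReal_mono (measure_ne_top _ _) (measure_mono h))

lemma distTail_nonneg (hw : IsPWF w) (X : Δ → ℝ) (t : ℝ) : 0 ≤ distTail P w X t :=
  (hw.maps (toReal_prob_mem_Icc _)).1

lemma distTail_antitone (hw : IsPWF w) (X : Δ → ℝ) : Antitone (distTail P w X) :=
  fun _ _ hst => hw.mono_prob fun _ hδ => lt_of_le_of_lt hst hδ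

end Tail

lemma distTail_eq_zero {Δ : Type*} [MeasurableSpace Δ] {P : Measure Δ} {w : ℝ → ℝ}
    (hw : IsPWF w) {X : Δ → ℝ} {M : ℝ} (hX : ∀ δ, X δ ≤ M)
    {t : ℝ} (ht : M ≤ t) : distTail P w X t = 0 := by
  have : {δ | t < X δ} = ∅ := by
    ext δ
    simpa using (hX δ).trans ht
  simp [distTail, this, hw.zero]

/-- Change of variables `z = u x` in the integral of a distorted tail. Only the positive part of
`X` matters, so `W` is any nonnegative function with `{W > t} = {X > t}` for all `t > 0`. -/
lemma integral_tail_comp_eq {Δ : Type*} [MeasurableSpace Δ] {P : Measure Δ} {w u u' : ℝ → ℝ}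
    (hmono : MonotoneOn u (Ici 0)) (hbij : BijOn u (Ici 0) (Ici 0)) (hu0 : u 0 = 0)
    (hder : ∀ x ∈ Ici (0 : ℝ), HasDerivWithinAt u (u' x) (Ici 0) x)
    (hnonneg : ∀ x ∈ Ici (0 : ℝ), 0 ≤ u' x)
    (W X : Δ → ℝ) (hW : ∀ δ, 0 ≤ W δ) (hWX : ∀ δ t, 0 < t → (t < W δ ↔ t < X δ)) :
    ∫ z in Ioi (0 : ℝ), w ((P {δ | z < u (W δ)}).toReal)
      = ∫ x in Ioi (0 : ℝ), distTail P w X x * u' x := by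
  have hstrict : StrictMonoOn u (Ici 0) := hmono.strictMonoOn_of_injOn hbij.injOn
  have himg : u '' Ioi 0 = Ioi 0 := by
    ext y
    constructor
    · rintro ⟨x, hx, rfl⟩
      have := hstrict self_mem_Ici (mem_Ici.2 (le_of_lt hx)) hx
      rwa [hu0] at this
    · intro hy
      obtain ⟨x, hx, rfl⟩ := hbij.surjOn (mem_Ici.2 (le_of_lt hy))
      refine ⟨x, mem_Ioi.2 (lt_of_le_of_ne hx ?_), rfl⟩
      rintro rfl
      exact absurd hy (by simp [hu0])
  have hcv := integral_image_eq_integral_abs_deriv_smul (s := Ioi (0 : ℝ)) (f := u) (f' := u')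
    measurableSet_Ioi
    (fun x hx => (hder x (mem_Ici.2 (le_of_lt hx))).mono Ioi_subset_Ici_self)
    (hbij.injOn.mono Ioi_subset_Ici_self)
    (fun z => w ((P {δ | z < u (W δ)}).toReal))
  rw [himg] at hcv
  rw [hcv]
  refine setIntegral_congr_fun measurableSet_Ioi fun x hx => ?_
  have hx0 : x ∈ Ici (0 : ℝ) := mem_Ici.2 (le_of_lt hx)
  have hset : {δ | u x < u (W δ)} = {δ | x < X δ} := by
    ext δ
    simp only [mem_ofPred_eq]
    rw [hstrict.lt_iff_lt hx0 (hW δ), hWX δ x hx]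
  simp only [distTail, hset, smul_eq_mul, abs_of_nonneg (hnonneg x hx0)]
  ring

lemma integrableOn_Ioi_of_antitoneOn {h : ℝ → ℝ} {b M : ℝ} (hh : AntitoneOn h (Ici b))
    (h0 : ∀ t, M ≤ t → h t = 0) : IntegrableOn h (Ioi b) := by
  have h1 : IntegrableOn h (Icc b M) :=
    (hh.mono Icc_subset_Ici_self).integrableOn_isCompact isCompact_Icc
  refine h1.of_forall_sdiff_eq_zero measurableSet_Ioi fun x hx => h0 x ?_
  by_contra hlt
  exact hx.2 ⟨le_of_lt hx.1, le_of_lt (not_le.1 hlt)⟩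

lemma antitoneOn_mul_of_nonneg {p q : ℝ → ℝ} {s : Set ℝ} (hp : AntitoneOn p s)
    (hq : AntitoneOn q s) (hp0 : ∀ x ∈ s, 0 ≤ p x) (hq0 : ∀ x ∈ s, 0 ≤ q x) :
    AntitoneOn (fun x => p x * q x) s := fun x hx y hy hxy =>
  mul_le_mul (hp hx hy hxy) (hq hx hy hxy) (hq0 y hy) (hp0 x hx)

lemma setIntegral_Ioi_comp_sub (h : ℝ → ℝ) (a : ℝ) :
    ∫ x in Ioi a, h (x - a) = ∫ x in Ioi (0 : ℝ), h x := by
  have := (measurePreserving_sub_right volume a).setIntegral_preimage_emb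
    (measurableEmbedding_subRight a) h (Ioi 0)
  simpa using this

lemma setIntegral_Ioi_split {h : ℝ → ℝ} {a : ℝ} (ha : 0 ≤ a) (hi : IntegrableOn h (Ioi 0)) :
    ∫ x in Ioi (0 : ℝ), h x = (∫ x in Ioc 0 a, h x) + ∫ x in Ioi a, h x := by
  rw [← Ioc_union_Ioi_eq_Ioi ha] at hi ⊢
  exact setIntegral_union (Ioc_disjoint_Ioi le_rfl) measurableSet_Ioi
    (hi.mono_set subset_union_left) (hi.mono_set subset_union_right)

section Shift

variable {p p₁ v : ℝ → ℝ} {a M M₁ : ℝ}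

/-- Effect on the gain integral: if the tail `p₁` lies below the tail `p` moved to the right by
`a`, then `∫ p₁ v` exceeds `∫ p v` by at most the integral over the window `(0, a]`. -/
lemma gain_shift_le (ha : 0 ≤ a) (hp : Antitone p) (hp0 : ∀ t, 0 ≤ p t)
    (hpM : ∀ t, M ≤ t → p t = 0) (hp₁ : Antitone p₁) (hp₁0 : ∀ t, 0 ≤ p₁ t)
    (hp₁M : ∀ t, M₁ ≤ t → p₁ t = 0) (hv : AntitoneOn v (Ici 0))
    (hv0 : ∀ x ∈ Ici (0 : ℝ), 0 ≤ v x) (hle : ∀ x, p₁ x ≤ p (x - a)) :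
    ∫ x in Ioi (0 : ℝ), p₁ x * v x
      ≤ (∫ x in Ioi (0 : ℝ), p x * v x) + ∫ z in Ioc 0 a, p (-z) * v (a - z) := by
  have hi₁ : IntegrableOn (fun x => p₁ x * v x) (Ioi 0) :=
    integrableOn_Ioi_of_antitoneOn (M := M₁)
      (antitoneOn_mul_of_nonneg (hp₁.antitoneOn _) hv (fun x _ => hp₁0 x) hv0)
      (fun t ht => by simp [hp₁M t ht])
  have hpa : Antitone fun x => p (x - a) := fun x y hxy => hp (by linarith)
  have hi₂ : IntegrableOn (fun x => p (x - a) * v x) (Ioi 0) :=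
    integrableOn_Ioi_of_antitoneOn (M := M + a)
      (antitoneOn_mul_of_nonneg (hpa.antitoneOn _) hv (fun x _ => hp0 _) hv0)
      (fun t ht => by simp [hpM (t - a) (by linarith)])
  have hva : AntitoneOn (fun x => v (x - a)) (Ici a) := fun x hx y hy hxy =>
    hv (mem_Ici.2 (sub_nonneg.2 hx)) (mem_Ici.2 (sub_nonneg.2 hy)) (by linarith)
  have hi₃ : IntegrableOn (fun x => p (x - a) * v (x - a)) (Ioi a) :=
    integrableOn_Ioi_of_antitoneOn (M := M + a)
      (antitoneOn_mul_of_nonneg (hpa.antitoneOn _) hva (fun x _ => hp0 _)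
        (fun x hx => hv0 _ (mem_Ici.2 (sub_nonneg.2 hx))))
      (fun t ht => by simp [hpM (t - a) (by linarith)])
  have h1 : ∫ x in Ioi (0 : ℝ), p₁ x * v x ≤ ∫ x in Ioi (0 : ℝ), p (x - a) * v x :=
    setIntegral_mono_on hi₁ hi₂ measurableSet_Ioi fun x hx =>
      mul_le_mul_of_nonneg_right (hle x) (hv0 x (mem_Ici.2 (le_of_lt hx)))
  have h2 : ∫ x in Ioi a, p (x - a) * v x ≤ ∫ x in Ioi (0 : ℝ), p x * v x := by
    rw [← setIntegral_Ioi_comp_sub (fun x => p x * v x) a]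
    refine setIntegral_mono_on (hi₂.mono_set (Ioi_subset_Ioi ha)) hi₃ measurableSet_Ioi
      fun x hx => mul_le_mul_of_nonneg_left ?_ (hp0 _)
    have hx' : a < x := hx
    exact hv (mem_Ici.2 (by linarith)) (mem_Ici.2 (by linarith)) (by linarith)
  have h3 : ∫ x in Ioc 0 a, p (x - a) * v x = ∫ z in Ioc 0 a, p (-z) * v (a - z) := by
    rw [← intervalIntegral.integral_of_le ha, ← intervalIntegral.integral_of_le ha]
    have := intervalIntegral.integral_comp_sub_left (a := 0) (b := a)
      (fun x => p (x - a) * v x) a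
    simpa using this.symm
  rw [setIntegral_Ioi_split ha hi₂] at h1
  linarith

/-- Effect on the loss integral: if the tail `p₁` lies above the tail `p` moved to the left by
`a`, then `∫ p v` exceeds `∫ p₁ v` by at most the integral over the window `(0, a]`. -/
lemma loss_shift_le (ha : 0 ≤ a) (hp : Antitone p) (hp0 : ∀ t, 0 ≤ p t)
    (hpM : ∀ t, M ≤ t → p t = 0) (hp₁ : Antitone p₁) (hp₁0 : ∀ t, 0 ≤ p₁ t)
    (hp₁M : ∀ t, M₁ ≤ t → p₁ t = 0) (hv : AntitoneOn v (Ici 0))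
    (hv0 : ∀ x ∈ Ici (0 : ℝ), 0 ≤ v x) (hle : ∀ x, p x ≤ p₁ (x - a)) :
    ∫ x in Ioi (0 : ℝ), p x * v x
      ≤ (∫ x in Ioi (0 : ℝ), p₁ x * v x) + ∫ z in Ioc 0 a, p z * v z := by
  have hi : IntegrableOn (fun x => p x * v x) (Ioi 0) :=
    integrableOn_Ioi_of_antitoneOn (M := M)
      (antitoneOn_mul_of_nonneg (hp.antitoneOn _) hv (fun x _ => hp0 x) hv0)
      (fun t ht => by simp [hpM t ht])
  have hpa : Antitone fun x => p₁ (x - a) := fun x y hxy => hp₁ (by linarith)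
  have hva : AntitoneOn (fun x => v (x - a)) (Ici a) := fun x hx y hy hxy =>
    hv (mem_Ici.2 (sub_nonneg.2 hx)) (mem_Ici.2 (sub_nonneg.2 hy)) (by linarith)
  have hi₃ : IntegrableOn (fun x => p₁ (x - a) * v (x - a)) (Ioi a) :=
    integrableOn_Ioi_of_antitoneOn (M := M₁ + a)
      (antitoneOn_mul_of_nonneg (hpa.antitoneOn _) hva (fun x _ => hp₁0 _)
        (fun x hx => hv0 _ (mem_Ici.2 (sub_nonneg.2 hx))))
      (fun t ht => by simp [hp₁M (t - a) (by linarith)])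
  have h2 : ∫ x in Ioi a, p x * v x ≤ ∫ x in Ioi (0 : ℝ), p₁ x * v x := by
    rw [← setIntegral_Ioi_comp_sub (fun x => p₁ x * v x) a]
    refine setIntegral_mono_on (hi.mono_set (Ioi_subset_Ioi ha)) hi₃ measurableSet_Ioi
      fun x hx => ?_
    have hx' : a < x := hx
    exact mul_le_mul (hle x)
      (hv (mem_Ici.2 (by linarith)) (mem_Ici.2 (by linarith)) (by linarith))
      (hv0 _ (mem_Ici.2 (by linarith))) (hp₁0 _)
  rw [setIntegral_Ioi_split ha hi]
  linarith

end Shift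

lemma deriv_nonneg_of_monotoneOn_Ici {u u' : ℝ → ℝ} (hmono : MonotoneOn u (Ici 0))
    (hder : ∀ x ∈ Ici (0 : ℝ), HasDerivWithinAt u (u' x) (Ici 0) x) :
    ∀ x ∈ Ici (0 : ℝ), 0 ≤ u' x := fun x hx => by
  rw [← (hder x hx).derivWithin (uniqueDiffOn_Ici 0 x hx)]
  exact hmono.derivWithin_nonneg

/-- Contraction property of the discounted CPT Bellman mapping:
`|H(J) − H(J')| ≤ β · sup_x |J x − J' x|`. -/
theorem Hmap_contraction {Δ S : Type*} [MeasurableSpace Δ] [MeasurableSpace S]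
    (P : Measure Δ) [IsProbabilityMeasure P]
    (f : Δ → S) (hf : Measurable f) (g : Δ → ℝ) (hg : Measurable g)
    (c₀ : ℝ) (hc₀ : 0 < c₀) (hgbdd : ∀ δ, |g δ| ≤ c₀)
    (α : ℝ) (hα : α ∈ Ioo (0:ℝ) 1)
    (up um up' um' wp wm : ℝ → ℝ)
    -- (1) utilities monotone non-decreasing on [0,∞), weighting functions
    (hupMono : MonotoneOn up (Ici 0)) (hupMaps : MapsTo up (Ici 0) (Ici 0))
    (hupMeas : Measurable up)
    (humMono : MonotoneOn um (Ici 0)) (humMaps : MapsTo um (Ici 0) (Ici 0))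
    (humMeas : Measurable um)
    (hwp : IsPWF wp) (hwm : IsPWF wm)
    -- (2) invertible and differentiable with u⁺(0) = u⁻(0) = 0
    (hupBij : BijOn up (Ici 0) (Ici 0)) (humBij : BijOn um (Ici 0) (Ici 0))
    (hupDeriv : ∀ x ∈ Ici (0:ℝ), HasDerivWithinAt up (up' x) (Ici 0) x)
    (humDeriv : ∀ x ∈ Ici (0:ℝ), HasDerivWithinAt um (um' x) (Ici 0) x)
    (hup0 : up 0 = 0) (hum0 : um 0 = 0)
    -- (3) derivatives monotonically non-increasing
    (hup'Anti : AntitoneOn up' (Ici 0)) (hum'Anti : AntitoneOn um' (Ici 0))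
    -- (4) the key integral inequality, over all non-negative random variables
    (β : ℝ) (hβ : β ∈ Ioo (0:ℝ) 1)
    (hkey : ∀ (Ω : Type) [MeasurableSpace Ω] (Q : Measure Ω),
      IsProbabilityMeasure Q → ∀ (Z : Ω → ℝ), Measurable Z → (∀ ω, 0 ≤ Z ω) →
      ∀ c : ℝ, 0 < c →
      (∫ z in Ioc (0:ℝ) (α * c), wp ((Q {ω | Z ω < z}).toReal) * up' (α * c - z))
        + (∫ z in Ioc (0:ℝ) (α * c), wm ((Q {ω | z < Z ω}).toReal) * um' z)
        ≤ β * c) :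
    ∀ (J J' : S → ℝ), Measurable J → Measurable J' →
      (∃ M, ∀ x, |J x| ≤ M) → (∃ M, ∀ x, |J' x| ≤ M) →
      |Hmap P wp wm up um f g α J - Hmap P wp wm up um f g α J'|
        ≤ β * ⨆ x, |J x - J' x| := by
  have hα0 : 0 < α := hα.1
  have hvp := deriv_nonneg_of_monotoneOn_Ici hupMono hupDeriv
  have hvm := deriv_nonneg_of_monotoneOn_Ici humMono humDeriv
  have hform : ∀ J : S → ℝ, Hmap P wp wm up um f g α J =
      (∫ x in Ioi (0 : ℝ), distTail P wp (fun δ => g δ + α * J (f δ)) x * up' x)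
      - ∫ x in Ioi (0 : ℝ), distTail P wm (fun δ => -(g δ + α * J (f δ))) x * um' x := by
    intro J
    unfold Hmap
    congr 1
    · exact integral_tail_comp_eq hupMono hupBij hup0 hupDeriv hvp _ _
        (fun δ => le_max_right _ _) (fun δ t ht => by simp [not_lt.2 ht.le])
    · refine integral_tail_comp_eq humMono humBij hum0 humDeriv hvm _ _
        (fun δ => neg_nonneg.2 (min_le_right _ _)) (fun δ t ht => ?_)
      rw [lt_neg, min_lt_iff, lt_neg]
      constructor
      · rintro (h | h)
        · exact h
        · linarith
      · exact Or.inl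
  -- One-sided estimate, with the supremum replaced by an arbitrary positive bound.
  have hone : ∀ (J J' : S → ℝ), Measurable J' →
      (∃ M, ∀ x, |J x| ≤ M) → (∃ M, ∀ x, |J' x| ≤ M) → ∀ c : ℝ, 0 < c →
      (∀ x, J x ≤ J' x + c) →
      Hmap P wp wm up um f g α J - Hmap P wp wm up um f g α J' ≤ β * c := by
    rintro J J' hJ'meas ⟨M, hM⟩ ⟨M', hM'⟩ c hc hJJ'
    have hbd : ∀ (K : S → ℝ) (L : ℝ), (∀ x, |K x| ≤ L) →
        ∀ δ, |g δ + α * K (f δ)| ≤ c₀ + α * L := fun K L hK δ =>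
      (abs_add_le _ _).trans (add_le_add (hgbdd δ) (by
        rw [abs_mul, abs_of_pos hα0]
        exact mul_le_mul_of_nonneg_left (hK _) hα0.le))
    set X : Δ → ℝ := fun δ => g δ + α * J (f δ) with hX
    set Y : Δ → ℝ := fun δ => g δ + α * J' (f δ) with hY
    have hYmeas : Measurable Y := hg.add ((hJ'meas.comp hf).const_mul α)
    have hXY : ∀ δ, X δ ≤ Y δ + α * c := fun δ => by
      have := mul_le_mul_of_nonneg_left (hJJ' (f δ)) hα0.le
      simp only [hX, hY]
      linarith
    have hXb := hbd J M hM
    have hYb := hbd J' M' hM'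
    have ha : 0 ≤ α * c := (mul_pos hα0 hc).le
    have hgain := gain_shift_le (a := α * c) (p := distTail P wp Y) (p₁ := distTail P wp X)
      (v := up') ha (distTail_antitone hwp Y) (distTail_nonneg hwp Y)
      (fun t => distTail_eq_zero hwp fun δ => (abs_le.1 (hYb δ)).2)
      (distTail_antitone hwp X) (distTail_nonneg hwp X)
      (fun t => distTail_eq_zero hwp fun δ => (abs_le.1 (hXb δ)).2) hup'Anti hvp
      (fun x => hwp.mono_prob fun δ hδ => by
        have h1 : x < X δ := hδ
        have := hXY δ
        change x - α * c < Y δ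
        linarith)
    have hloss := loss_shift_le (a := α * c) (p := distTail P wm fun δ => -Y δ)
      (p₁ := distTail P wm fun δ => -X δ)
      (v := um') ha (distTail_antitone hwm _) (distTail_nonneg hwm _)
      (fun t => distTail_eq_zero hwm fun δ => neg_le.1 (abs_le.1 (hYb δ)).1)
      (distTail_antitone hwm _) (distTail_nonneg hwm _)
      (fun t => distTail_eq_zero hwm fun δ => neg_le.1 (abs_le.1 (hXb δ)).1) hum'Anti hvm
      (fun x => hwm.mono_prob fun δ hδ => by
        have h1 : x < -Y δ := hδ
        have := hXY δ
        change x - α * c < -X δ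
        linarith)
    -- The sample space in `hkey` lives in `Type`, so `Z = (-Y)₊` is realised on the law of `Y`.
    have hk := hkey ℝ (P.map Y) (Measure.isProbabilityMeasure_map hYmeas.aemeasurable)
      (fun y => max (-y) 0) (by fun_prop) (fun y => le_max_right _ _) c hc
    have e1 : ∫ z in Ioc (0 : ℝ) (α * c),
          wp (((P.map Y) {y | max (-y) 0 < z}).toReal) * up' (α * c - z)
        = ∫ z in Ioc 0 (α * c), distTail P wp Y (-z) * up' (α * c - z) := by
      refine setIntegral_congr_fun measurableSet_Ioc fun z hz => ?_
      have hz0 : 0 < z := hz.1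
      have hset : Y ⁻¹' {y | max (-y) 0 < z} = {δ | -z < Y δ} := by
        ext δ
        simp [hz0, neg_lt]
      have hm : MeasurableSet {y : ℝ | max (-y) 0 < z} :=
        measurableSet_lt (by fun_prop) measurable_const
      simp only [Measure.map_apply hYmeas hm, hset, distTail]
    have e2 : ∫ z in Ioc (0 : ℝ) (α * c),
          wm (((P.map Y) {y | z < max (-y) 0}).toReal) * um' z
        = ∫ z in Ioc 0 (α * c), distTail P wm (fun δ => -Y δ) z * um' z := by
      refine setIntegral_congr_fun measurableSet_Ioc fun z hz => ?_
      have hz0 : 0 < z := hz.1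
      have hset : Y ⁻¹' {y | z < max (-y) 0} = {δ | z < -Y δ} := by
        ext δ
        simp [not_lt.2 hz0.le]
      have hm : MeasurableSet {y : ℝ | z < max (-y) 0} :=
        measurableSet_lt measurable_const (by fun_prop)
      simp only [Measure.map_apply hYmeas hm, hset, distTail]
    rw [e1, e2] at hk
    rw [hform J, hform J']
    linarith
  intro J J' hJ hJ' hJb hJb'
  have hbdd : BddAbove (range fun x => |J x - J' x|) := by
    obtain ⟨M, hM⟩ := hJb
    obtain ⟨M', hM'⟩ := hJb'
    refine ⟨M + M', ?_⟩
    rintro _ ⟨x, rfl⟩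
    exact (abs_sub _ _).trans (add_le_add (hM x) (hM' x))
  have hle : ∀ x, |J x - J' x| ≤ ⨆ x, |J x - J' x| := fun x => le_ciSup hbdd x
  rcases (Real.iSup_nonneg fun x => abs_nonneg (J x - J' x)).eq_or_lt with h0 | hpos
  · have hEq : J = J' := by
      funext x
      have := hle x
      rw [← h0] at this
      exact sub_eq_zero.1 (abs_nonpos_iff.1 this)
    rw [← h0, hEq]
    simp
  · rw [abs_le]
    have h1 := hone J J' hJ' hJb hJb' _ hpos fun x => by
      linarith [(abs_le.1 (hle x)).2]
    have h2 := hone J' J hJ hJb' hJb _ hpos fun x => by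
      linarith [(abs_le.1 (hle x)).1]
    constructor <;> linarith
end

section
/- Suppose u⁺, u⁻ : [0,∞) → [0,∞) are monotonically non-decreasing, invertible, differentiable, satisfy u⁺(0) = u⁻(0) = 0, and have monotonically non-increasing derivatives u⁺′, u⁻′; suppose w⁺, w⁻ are probability weighting functions; and suppose there exists β ∈ (0,1) such that for every c > 0 and every non-negative real random variable Z, ∫₀^{αc} w⁺(P(Z < z)) u⁺′(αc − z) dz + ∫₀^{αc} w⁻(P(Z > z)) u⁻′(z) dz ≤ β c, where α ∈ (0,1) is fixed. Then for every c > 0 and all real random variables Y, Y' on a common probability space satisfying |Y − Y'| ≤ α c almost surely, |C(Y) − C(Y')| ≤ β c, where C denotes the CPT-functional with reference point 0. -/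
/-!
For `u` differentiable and increasing on `[0,∞)`, the substitution `x = u t` turns each half of the
CPT-functional into `∫₀^∞ u'(t) w(P(t < X)) dt` (`cptPos_eq`); the negative half is the positive
half of `-X` (`cptNeg_eq`). Put `a = α c` and suppose `X ≤ Y + a` almost surely. Since `u'` is
non-increasing, shifting the variable by `a` bounds the part of this integral over `(a,∞)` by the
whole integral for `Y` (`cptL_tail`). This is applied to the pair itself for the positive half, and
to `-Y ≤ -X + a` for the negative half. What remains for each half is an integral over `(0,a]`, and
with `Z = max (-Y) 0` the two remainders are bounded by the two terms of the assumed key inequality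
(`cptPos_sub_le_reflect`, `cptPos_sub_le`).

The integrals are taken in `ℝ≥0∞`. Since also `Y ≤ X + a`, the shift bounds hold in both directions
with finite remainders, so the integrals for `X` and `Y` are finite or infinite together; in the
infinite case both Bochner integrals are `0` by convention and the estimate persists
(`toReal_sub_le`).
-/

open MeasureTheory Set

/-- Positive part of the CPT-functional with reference point `0`:
`∫₀^∞ w⁺(P(u⁺(X₊) > x)) dx`. -/
noncomputable def cptPos {Ω : Type*} [MeasurableSpace Ω] (P : Measure Ω)
    (w u : ℝ → ℝ) (X : Ω → ℝ) : ℝ :=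
  ∫ x in Ioi (0:ℝ), w ((P {ω | x < u (max (X ω) 0)}).toReal)

/-- Negative part of the CPT-functional with reference point `0`:
`∫₀^∞ w⁻(P(u⁻(X₋) > x)) dx`. -/
noncomputable def cptNeg {Ω : Type*} [MeasurableSpace Ω] (P : Measure Ω)
    (w u : ℝ → ℝ) (X : Ω → ℝ) : ℝ :=
  ∫ x in Ioi (0:ℝ), w ((P {ω | x < u (-(min (X ω) 0))}).toReal)

/-- The CPT-functional with reference point `0`. -/
noncomputable def cpt {Ω : Type*} [MeasurableSpace Ω] (P : Measure Ω)
    (wp wm up um : ℝ → ℝ) (X : Ω → ℝ) : ℝ :=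
  cptPos P wp up X - cptNeg P wm um X

open scoped ENNReal

/-! ### Change of variables and shift bounds -/

/-- The `ℝ≥0∞`-valued integral `∫ u'(t) w(P(t < X)) dt` over `s`. -/
noncomputable def cptL {Ω : Type*} [MeasurableSpace Ω] (P : Measure Ω)
    (w u' : ℝ → ℝ) (X : Ω → ℝ) (s : Set ℝ) : ℝ≥0∞ :=
  ∫⁻ t in s, ENNReal.ofReal (u' t) * ENNReal.ofReal (w ((P {ω | t < X ω}).toReal))

section

variable {Ω : Type*} [MeasurableSpace Ω] (P : Measure Ω) {w u u' : ℝ → ℝ}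

lemma cptNeg_eq (X : Ω → ℝ) : cptNeg P w u X = cptPos P w u (fun ω => - X ω) := by
  have h (x : ℝ) : -(min x 0) = max (-x) 0 := by
    rcases le_total x 0 with h | h <;> simp [h]
  simp only [cptNeg, cptPos, h]

lemma cptL_split (X : Ω → ℝ) {a : ℝ} (ha : 0 ≤ a) :
    cptL P w u' X (Ioi 0) = cptL P w u' X (Ioc 0 a) + cptL P w u' X (Ioi a) := by
  unfold cptL
  rw [← Ioc_union_Ioi_eq_Ioi ha, lintegral_union measurableSet_Ioi]
  exact Set.disjoint_left.2 fun x hx hx' => not_lt.2 hx.2 hx'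

end

section

variable {Ω : Type*} [MeasurableSpace Ω] (P : Measure Ω) [IsProbabilityMeasure P]
  {w u u' : ℝ → ℝ}

lemma toReal_mem (s : Set Ω) : (P s).toReal ∈ Icc (0:ℝ) 1 :=
  ⟨ENNReal.toReal_nonneg, by
    simpa using ENNReal.toReal_mono ENNReal.one_ne_top (prob_le_one (μ := P) (s := s))⟩

lemma IsPWF.le_of_ae (hw : IsPWF w) {s t : Set Ω} (h : s ≤ᵐ[P] t) :
    w ((P s).toReal) ≤ w ((P t).toReal) :=
  hw.mono (toReal_mem P s) (toReal_mem P t)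
    (ENNReal.toReal_mono (measure_ne_top P t) (measure_mono_ae h))

lemma IsPWF.le_of_subset (hw : IsPWF w) {s t : Set Ω} (h : s ⊆ t) :
    w ((P s).toReal) ≤ w ((P t).toReal) :=
  hw.le_of_ae P h.eventuallyLE

lemma IsPWF.antitone_gt (hw : IsPWF w) (X : Ω → ℝ) :
    Antitone fun t : ℝ => w ((P {ω | t < X ω}).toReal) := fun _ _ h =>
  hw.le_of_subset P fun _ hω => lt_of_le_of_lt h hω

lemma IsPWF.monotone_lt (hw : IsPWF w) (X : Ω → ℝ) :
    Monotone fun t : ℝ => w ((P {ω | X ω < t}).toReal) := fun _ _ h =>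
  hw.le_of_subset P fun _ hω => lt_of_lt_of_le hω h

lemma deriv_nonneg_of_mono (hu : MonotoneOn u (Ici 0))
    (hd : ∀ x ∈ Ici (0:ℝ), HasDerivWithinAt u (u' x) (Ici 0) x) {x : ℝ} (hx : x ∈ Ici (0:ℝ)) :
    0 ≤ u' x := by
  rw [← (hd x hx).derivWithin (uniqueDiffOn_Ici 0 x hx)]
  exact hu.derivWithin_nonneg

/-- The substitution `x = u t` in the positive half of the CPT-functional. -/
lemma cptPos_eq (hw : IsPWF w) (hu : MonotoneOn u (Ici 0)) (hb : BijOn u (Ici 0) (Ici 0))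
    (hd : ∀ x ∈ Ici (0:ℝ), HasDerivWithinAt u (u' x) (Ici 0) x) (h0 : u 0 = 0) (X : Ω → ℝ) :
    cptPos P w u X = (cptL P w u' X (Ioi 0)).toReal := by
  have hs : StrictMonoOn u (Ici 0) := hu.strictMonoOn_of_injOn hb.injOn
  have him : u '' Ioi 0 = Ioi 0 := by
    ext y
    constructor
    · rintro ⟨x, hx, rfl⟩
      have := hs (mem_Ici.2 le_rfl) (mem_Ici.2 (le_of_lt hx)) hx
      rwa [h0] at this
    · intro hy
      obtain ⟨x, hx, rfl⟩ := hb.surjOn (mem_Ici.2 (le_of_lt hy))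
      refine ⟨x, mem_Ioi.2 (lt_of_le_of_ne hx ?_), rfl⟩
      rintro rfl
      exact absurd hy (by simp [h0])
  have hanti : Antitone fun x : ℝ => w ((P {ω | x < u (max (X ω) 0)}).toReal) :=
    hw.antitone_gt P fun ω => u (max (X ω) 0)
  rw [cptPos, integral_eq_lintegral_of_nonneg_ae
    (.of_forall fun x => (hw.maps (toReal_mem P _)).1)
    hanti.measurable.aestronglyMeasurable]
  congr 1
  conv_lhs => rw [← him]
  rw [lintegral_image_eq_lintegral_abs_deriv_mul measurableSet_Ioi
    (fun x hx => (hd x (mem_Ici.2 (le_of_lt hx))).mono Ioi_subset_Ici_self)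
    (hb.injOn.mono Ioi_subset_Ici_self)]
  refine setLIntegral_congr_fun measurableSet_Ioi fun t ht => ?_
  have ht' : t ∈ Ici (0:ℝ) := mem_Ici.2 (le_of_lt ht)
  have hset : {ω | u t < u (max (X ω) 0)} = {ω | t < X ω} := by
    ext ω
    have := hs.lt_iff_lt ht' (mem_Ici.2 (le_max_right (X ω) 0))
    simp only [mem_ofPred_eq, this, lt_max_iff]
    exact or_iff_left (not_lt.2 ht')
  simp only [hset, abs_of_nonneg (deriv_nonneg_of_mono hu hd ht')]

/-- Shifting the variable by `a` bounds the tail of the integral, because `u'` is non-increasing. -/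
lemma cptL_tail (hw : IsPWF w) (hanti : AntitoneOn u' (Ici 0)) {X Y : Ω → ℝ} {a : ℝ}
    (ha : 0 ≤ a) (h : ∀ᵐ ω ∂P, X ω ≤ Y ω + a) :
    cptL P w u' X (Ioi a) ≤ cptL P w u' Y (Ioi 0) := by
  have him : (fun x : ℝ => x + a) '' Ioi 0 = Ioi a := by simp
  unfold cptL
  rw [← him, lintegral_image_eq_lintegral_abs_deriv_mul (f' := fun _ => 1) measurableSet_Ioi
    (fun x _ => ((hasDerivAt_id' x).add_const a).hasDerivWithinAt)
    (add_left_injective a).injOn]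
  refine setLIntegral_mono' measurableSet_Ioi fun t ht => ?_
  have ht0 : (0:ℝ) ≤ t := le_of_lt ht
  simp only [abs_one, ENNReal.ofReal_one, one_mul]
  gcongr
  · exact hanti (mem_Ici.2 ht0) (mem_Ici.2 (by linarith)) (by linarith)
  · refine hw.le_of_ae P ?_
    filter_upwards [h] with ω hω (hlt : t + a < X ω)
    change t < Y ω
    linarith

/-- The part over `(0,a]`, reflected by `t = a - z`: almost surely `a - z < X` forces `-Y < z`. -/
lemma cptL_head_reflect (hw : IsPWF w) {X Y : Ω → ℝ} {a : ℝ} (h : ∀ᵐ ω ∂P, X ω ≤ Y ω + a) :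
    cptL P w u' X (Ioc 0 a) ≤ ∫⁻ z in Ioc (0:ℝ) a,
      ENNReal.ofReal (w ((P {ω | max (- Y ω) 0 < z}).toReal) * u' (a - z)) := by
  have him : (fun x : ℝ => a - x) '' Ioo 0 a = Ioo 0 a := by simp
  unfold cptL
  -- Passing to `(0,a)` makes the domain invariant under the reflection.
  rw [← setLIntegral_congr (Ioo_ae_eq_Ioc (μ := volume) (a := (0:ℝ)) (b := a)),
    ← setLIntegral_congr (Ioo_ae_eq_Ioc (μ := volume) (a := (0:ℝ)) (b := a))]
  conv_lhs => rw [← him]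
  rw [lintegral_image_eq_lintegral_abs_deriv_mul (f' := fun _ => -1) measurableSet_Ioo
    (fun x _ => ((hasDerivAt_id' x).const_sub a).hasDerivWithinAt)
    (sub_right_injective (b := a)).injOn]
  refine setLIntegral_mono' measurableSet_Ioo fun z hz => ?_
  simp only [abs_neg, abs_one, ENNReal.ofReal_one, one_mul]
  rw [ENNReal.ofReal_mul (hw.maps (toReal_mem P _)).1, mul_comm]
  gcongr
  refine hw.le_of_ae P ?_
  filter_upwards [h] with ω hω (hlt : a - z < X ω)
  change max (- Y ω) 0 < z
  exact max_lt (by linarith) hz.1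

/-- For `z > 0` the events `z < X` and `z < max X 0` coincide. -/
lemma cptL_head (hw : IsPWF w) (X : Ω → ℝ) (a : ℝ) :
    cptL P w u' X (Ioc 0 a) = ∫⁻ z in Ioc (0:ℝ) a,
      ENNReal.ofReal (w ((P {ω | z < max (X ω) 0}).toReal) * u' z) := by
  refine setLIntegral_congr_fun measurableSet_Ioc fun z hz => ?_
  have hset : {ω | z < max (X ω) 0} = {ω | z < X ω} := by
    ext ω
    simp only [mem_ofPred_eq, lt_max_iff]
    exact or_iff_left (not_lt.2 hz.1.le)
  simp only [hset]
  rw [ENNReal.ofReal_mul (hw.maps (toReal_mem P _)).1, mul_comm]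

end

/-! ### Finiteness and comparison of real integrals -/

/-- A remainder integral is finite and agrees with its Bochner version: the weight lies in `[0,1]`
and the derivative factor is bounded by its value at `0`. -/
lemma remainder_eq {f g : ℝ → ℝ} {a K : ℝ} (hf : Measurable f) (hf01 : ∀ z, f z ∈ Icc (0:ℝ) 1)
    (hg : AEMeasurable g (volume.restrict (Ioc 0 a))) (hg0 : ∀ z ∈ Ioc 0 a, 0 ≤ g z)
    (hgK : ∀ z ∈ Ioc 0 a, g z ≤ K) :
    (∫⁻ z in Ioc 0 a, ENNReal.ofReal (f z * g z)) ≠ ∞ ∧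
    (∫⁻ z in Ioc 0 a, ENNReal.ofReal (f z * g z)).toReal = ∫ z in Ioc 0 a, f z * g z := by
  constructor
  · refine ne_top_of_le_ne_top (b := ∫⁻ _ in Ioc 0 a, ENNReal.ofReal K) ?_
      (setLIntegral_mono' measurableSet_Ioc fun z hz => ENNReal.ofReal_le_ofReal ?_)
    · rw [setLIntegral_const]
      exact ENNReal.mul_ne_top ENNReal.ofReal_ne_top measure_Ioc_lt_top.ne
    · exact (mul_le_of_le_one_left (hg0 z hz) (hf01 z).2).trans (hgK z hz)
  · refine (integral_eq_lintegral_of_nonneg_ae ?_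
      (hf.aemeasurable.mul hg).aestronglyMeasurable).symm
    exact ae_restrict_of_forall_mem measurableSet_Ioc
      fun z hz => mul_nonneg (hf01 z).1 (hg0 z hz)

/-- Subtracting real parts of extended bounds. If both sides are infinite, the convention
`(∞).toReal = 0` keeps the inequality valid. -/
lemma toReal_sub_le {x y r : ℝ≥0∞} (h : x ≤ y + r) (hr : r ≠ ∞) (hxy : y = ∞ → x = ∞) :
    x.toReal - y.toReal ≤ r.toReal := by
  by_cases hy : y = ∞
  · simp [hy, hxy hy]
  · have := ENNReal.toReal_mono (ENNReal.add_ne_top.2 ⟨hy, hr⟩) h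
    rw [ENNReal.toReal_add hy hr] at this
    linarith

section

variable {Ω : Type*} [MeasurableSpace Ω] (P : Measure Ω) [IsProbabilityMeasure P]
  {w u u' : ℝ → ℝ}

lemma head_facts (hw : IsPWF w) (hu : MonotoneOn u (Ici 0))
    (hd : ∀ x ∈ Ici (0:ℝ), HasDerivWithinAt u (u' x) (Ici 0) x) (hanti : AntitoneOn u' (Ici 0))
    (Z : Ω → ℝ) (a : ℝ) :
    (∫⁻ z in Ioc 0 a, ENNReal.ofReal (w ((P {ω | z < Z ω}).toReal) * u' z)) ≠ ∞ ∧
    (∫⁻ z in Ioc 0 a, ENNReal.ofReal (w ((P {ω | z < Z ω}).toReal) * u' z)).toReal =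
      ∫ z in Ioc 0 a, w ((P {ω | z < Z ω}).toReal) * u' z :=
  remainder_eq (f := fun z => w ((P {ω | z < Z ω}).toReal)) (K := u' 0)
    (hw.antitone_gt P Z).measurable (fun _ => hw.maps (toReal_mem P _))
    (aemeasurable_restrict_of_antitoneOn measurableSet_Ioc
      (hanti.mono fun _ hz => mem_Ici.2 hz.1.le))
    (fun _ hz => deriv_nonneg_of_mono hu hd (mem_Ici.2 hz.1.le))
    (fun _ hz => hanti (mem_Ici.2 le_rfl) (mem_Ici.2 hz.1.le) hz.1.le)

lemma head_reflect_facts (hw : IsPWF w) (hu : MonotoneOn u (Ici 0))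
    (hd : ∀ x ∈ Ici (0:ℝ), HasDerivWithinAt u (u' x) (Ici 0) x) (hanti : AntitoneOn u' (Ici 0))
    (Z : Ω → ℝ) (a : ℝ) :
    (∫⁻ z in Ioc 0 a, ENNReal.ofReal (w ((P {ω | Z ω < z}).toReal) * u' (a - z))) ≠ ∞ ∧
    (∫⁻ z in Ioc 0 a, ENNReal.ofReal (w ((P {ω | Z ω < z}).toReal) * u' (a - z))).toReal =
      ∫ z in Ioc 0 a, w ((P {ω | Z ω < z}).toReal) * u' (a - z) := by
  have hmem : ∀ z ∈ Ioc 0 a, a - z ∈ Ici (0:ℝ) := fun z hz => mem_Ici.2 (sub_nonneg.2 hz.2)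
  exact remainder_eq (f := fun z => w ((P {ω | Z ω < z}).toReal)) (g := fun z => u' (a - z))
    (K := u' 0) (hw.monotone_lt P Z).measurable (fun _ => hw.maps (toReal_mem P _))
    (aemeasurable_restrict_of_monotoneOn measurableSet_Ioc
      fun x hx y hy hxy => hanti (hmem y hy) (hmem x hx) (by linarith))
    (fun z hz => deriv_nonneg_of_mono hu hd (hmem z hz))
    (fun z hz => hanti (mem_Ici.2 le_rfl) (hmem z hz) (hmem z hz))

/-- The part of the integral for `X` over `(0,a]` is always finite, so a divergence comes from the
tail, which the integral for `Y` dominates. -/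
lemma cptL_eq_top (hw : IsPWF w) (hu : MonotoneOn u (Ici 0))
    (hd : ∀ x ∈ Ici (0:ℝ), HasDerivWithinAt u (u' x) (Ici 0) x) (hanti : AntitoneOn u' (Ici 0))
    {X Y : Ω → ℝ} {a : ℝ} (ha : 0 ≤ a) (h : ∀ᵐ ω ∂P, X ω ≤ Y ω + a)
    (hX : cptL P w u' X (Ioi 0) = ∞) : cptL P w u' Y (Ioi 0) = ∞ := by
  by_contra hY
  refine absurd hX ?_
  rw [cptL_split P X ha, cptL_head P hw]
  exact ENNReal.add_ne_top.2 ⟨(head_facts P hw hu hd hanti _ a).1,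
    ne_top_of_le_ne_top hY (cptL_tail P hw hanti ha h)⟩

/-- The remainder is expressed through the subtracted variable `Y`: shifting `Y` up by `a` adds
exactly the levels `-z` with `0 < z ≤ a`, and there `Y > -z` means `max (-Y) 0 < z`. -/
lemma cptPos_sub_le_reflect (hw : IsPWF w) (hu : MonotoneOn u (Ici 0))
    (hb : BijOn u (Ici 0) (Ici 0))
    (hd : ∀ x ∈ Ici (0:ℝ), HasDerivWithinAt u (u' x) (Ici 0) x) (h0 : u 0 = 0)
    (hanti : AntitoneOn u' (Ici 0)) {X Y : Ω → ℝ} {a : ℝ} (ha : 0 ≤ a)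
    (h : ∀ᵐ ω ∂P, X ω ≤ Y ω + a) (h' : ∀ᵐ ω ∂P, Y ω ≤ X ω + a) :
    cptPos P w u X - cptPos P w u Y ≤
      ∫ z in Ioc 0 a, w ((P {ω | max (- Y ω) 0 < z}).toReal) * u' (a - z) := by
  have hr := head_reflect_facts P hw hu hd hanti (fun ω => max (- Y ω) 0) a
  rw [cptPos_eq P hw hu hb hd h0, cptPos_eq P hw hu hb hd h0, ← hr.2]
  refine toReal_sub_le ?_ hr.1 (cptL_eq_top P hw hu hd hanti ha h')
  rw [cptL_split P X ha, add_comm]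
  exact add_le_add (cptL_tail P hw hanti ha h) (cptL_head_reflect P hw h)

/-- The remainder is expressed through `X` itself. The CPT-functional uses this bound for the
negative half, where `X` and `Y` are the negated variables. -/
lemma cptPos_sub_le (hw : IsPWF w) (hu : MonotoneOn u (Ici 0))
    (hb : BijOn u (Ici 0) (Ici 0))
    (hd : ∀ x ∈ Ici (0:ℝ), HasDerivWithinAt u (u' x) (Ici 0) x) (h0 : u 0 = 0)
    (hanti : AntitoneOn u' (Ici 0)) {X Y : Ω → ℝ} {a : ℝ} (ha : 0 ≤ a)
    (h : ∀ᵐ ω ∂P, X ω ≤ Y ω + a) (h' : ∀ᵐ ω ∂P, Y ω ≤ X ω + a) :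
    cptPos P w u X - cptPos P w u Y ≤
      ∫ z in Ioc 0 a, w ((P {ω | z < max (X ω) 0}).toReal) * u' z := by
  have hr := head_facts P hw hu hd hanti (fun ω => max (X ω) 0) a
  rw [cptPos_eq P hw hu hb hd h0, cptPos_eq P hw hu hb hd h0, ← hr.2]
  refine toReal_sub_le ?_ hr.1 (cptL_eq_top P hw hu hd hanti ha h')
  rw [cptL_split P X ha, add_comm, cptL_head P hw]
  gcongr
  exact cptL_tail P hw hanti ha h

end

/-- Lipschitz-type estimate for the CPT-functional: if `|Y − Y'| ≤ α c` almost
surely, then `|C(Y) − C(Y')| ≤ β c`. -/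
theorem cpt_lipschitz_estimate
    (α : ℝ) (hα : α ∈ Ioo (0:ℝ) 1)
    (up um up' um' wp wm : ℝ → ℝ)
    -- u⁺, u⁻ monotone non-decreasing on [0,∞), invertible, differentiable,
    -- vanishing at 0, with non-increasing derivatives
    (hupMono : MonotoneOn up (Ici 0)) (hupMaps : MapsTo up (Ici 0) (Ici 0))
    (humMono : MonotoneOn um (Ici 0)) (humMaps : MapsTo um (Ici 0) (Ici 0))
    (hupBij : BijOn up (Ici 0) (Ici 0)) (humBij : BijOn um (Ici 0) (Ici 0))
    (hupDeriv : ∀ x ∈ Ici (0:ℝ), HasDerivWithinAt up (up' x) (Ici 0) x)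
    (humDeriv : ∀ x ∈ Ici (0:ℝ), HasDerivWithinAt um (um' x) (Ici 0) x)
    (hup0 : up 0 = 0) (hum0 : um 0 = 0)
    (hup'Anti : AntitoneOn up' (Ici 0)) (hum'Anti : AntitoneOn um' (Ici 0))
    -- w⁺, w⁻ probability weighting functions
    (hwp : IsPWF wp) (hwm : IsPWF wm)
    -- the key integral inequality, over all non-negative random variables
    (β : ℝ) (hβ : β ∈ Ioo (0:ℝ) 1)
    (hkey : ∀ (Ω : Type) [MeasurableSpace Ω] (Q : Measure Ω),
      IsProbabilityMeasure Q → ∀ (Z : Ω → ℝ), Measurable Z → (∀ ω, 0 ≤ Z ω) →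
      ∀ c : ℝ, 0 < c →
      (∫ z in Ioc (0:ℝ) (α * c), wp ((Q {ω | Z ω < z}).toReal) * up' (α * c - z))
        + (∫ z in Ioc (0:ℝ) (α * c), wm ((Q {ω | z < Z ω}).toReal) * um' z)
        ≤ β * c) :
    ∀ (c : ℝ), 0 < c →
    ∀ {Ω : Type} [MeasurableSpace Ω] (P : Measure Ω), IsProbabilityMeasure P →
    ∀ (Y Y' : Ω → ℝ), Measurable Y → Measurable Y' →
      (∀ᵐ ω ∂P, |Y ω - Y' ω| ≤ α * c) →
      |cpt P wp wm up um Y - cpt P wp wm up um Y'| ≤ β * c := by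
  intro c hc Ω _ P hP Y Y' hY hY' hYY'
  have ha : 0 ≤ α * c := (mul_pos hα.1 hc).le
  have main : ∀ X X' : Ω → ℝ, Measurable X' → (∀ᵐ ω ∂P, |X ω - X' ω| ≤ α * c) →
      cpt P wp wm up um X - cpt P wp wm up um X' ≤ β * c := by
    intro X X' hX' h
    have h1 : ∀ᵐ ω ∂P, X ω ≤ X' ω + α * c := by
      filter_upwards [h] with ω hω using by linarith [(abs_le.1 hω).2]
    have h2 : ∀ᵐ ω ∂P, X' ω ≤ X ω + α * c := by
      filter_upwards [h] with ω hω using by linarith [(abs_le.1 hω).1]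
    have hp := cptPos_sub_le_reflect P hwp hupMono hupBij hupDeriv hup0 hup'Anti ha h1 h2
    have hm := cptPos_sub_le P hwm humMono humBij humDeriv hum0 hum'Anti
      (X := fun ω => - X' ω) (Y := fun ω => - X ω) ha
      (by filter_upwards [h1] with ω hω using by linarith)
      (by filter_upwards [h2] with ω hω using by linarith)
    have hk := hkey Ω P hP (fun ω => max (- X' ω) 0) (hX'.neg.max measurable_const)
      (fun ω => le_max_right _ _) c hc
    simp only [cpt, cptNeg_eq]
    linarith
  refine abs_le.2 ⟨?_, main Y Y' hY' hYY'⟩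
  have := main Y' Y hY (by simpa only [abs_sub_comm] using hYY')
  linarith
end

section
/- Let Δ be a measurable space equipped with a probability measure P, let S be a measurable space with a distinguished absorbing state x_A ∈ S, let f : Δ → S and g : Δ → ℝ be measurable with g bounded, and let P̃ be the sub-probability measure defined by P̃(E) = P(E ∩ {δ : f(δ) ≠ x_A}) for measurable E ⊆ Δ. Suppose u⁺, u⁻ : [0,∞) → [0,∞) are monotonically non-decreasing measurable functions and w⁺, w⁻ are probability weighting functions. Define, for a bounded measurable function J : S → ℝ, H(J) = ∫₀^∞ w⁺(P̃({δ : u⁺((g(δ) + J(f(δ)))₊) > z})) dz − ∫₀^∞ w⁻(P̃({δ : u⁻((g(δ) + J(f(δ)))₋) > z})) dz. Then H is monotone: if J, J' : S → ℝ are bounded measurable with J(x) ≤ J'(x) for all x ∈ S, then H(J) ≤ H(J'). -/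
/-!
The positive part `(g + J ∘ f)₊` increases with `J` and the negative part decreases, and the
utilities preserve these inequalities. Hence every upper level set of the gain grows with `J`,
and every upper level set of the loss shrinks. Measures are monotone under inclusion and
weighting functions are monotone on `[0,1]`, so the two integrands compare pointwise;
`weighted_tail_integral_mono` integrates that comparison, and is applied once to the gains and
once, with the roles of `J` and `J'` exchanged, to the losses.
-/

open MeasureTheory Set

/-- The transient (undiscounted, absorbing) CPT dynamic-programming mapping at a
fixed state-action pair, using the sub-probability measure
`P̃(E) = P(E ∩ {δ : f(δ) ≠ x_A})`. -/
noncomputable def HmapTransient {Δ S : Type*} [MeasurableSpace Δ] [MeasurableSpace S]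
    (P : Measure Δ) (wp wm up um : ℝ → ℝ) (f : Δ → S) (g : Δ → ℝ) (xA : S)
    (J : S → ℝ) : ℝ :=
  (∫ z in Ioi (0:ℝ),
      wp ((P ({δ | z < up (max (g δ + J (f δ)) 0)} ∩ {δ | f δ ≠ xA})).toReal))
    - (∫ z in Ioi (0:ℝ),
      wm ((P ({δ | z < um (-(min (g δ + J (f δ)) 0))} ∩ {δ | f δ ≠ xA})).toReal))

/-- The Choquet-type integral of the weighted tail of a random variable `X`, restricted to an
event `A`, is monotone in `X`. The integrability hypotheses are needed because the Bochner
integral of a non-integrable function is `0`. -/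
lemma weighted_tail_integral_mono {Δ : Type*} [MeasurableSpace Δ]
    (P : Measure Δ) [IsProbabilityMeasure P] {w : ℝ → ℝ} (hw : IsPWF w)
    {X Y : Δ → ℝ} (A : Set Δ) (hXY : ∀ δ, X δ ≤ Y δ)
    (hX : IntegrableOn (fun z => w ((P ({δ | z < X δ} ∩ A)).toReal)) (Ioi 0))
    (hY : IntegrableOn (fun z => w ((P ({δ | z < Y δ} ∩ A)).toReal)) (Ioi 0)) :
    (∫ z in Ioi (0:ℝ), w ((P ({δ | z < X δ} ∩ A)).toReal))
      ≤ ∫ z in Ioi (0:ℝ), w ((P ({δ | z < Y δ} ∩ A)).toReal) := by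
  have hmem : ∀ E : Set Δ, (P E).toReal ∈ Icc (0:ℝ) 1 := fun E =>
    ⟨ENNReal.toReal_nonneg, measureReal_le_one⟩
  refine integral_mono hX hY fun z => hw.mono (hmem _) (hmem _) ?_
  exact ENNReal.toReal_mono (measure_ne_top P _)
    (measure_mono (inter_subset_inter_left A fun δ hδ => lt_of_lt_of_le hδ (hXY δ)))

/-- Monotonicity of the transient CPT Bellman mapping: if `J ≤ J'` pointwise
then `H(J) ≤ H(J')`. -/
theorem HmapTransient_monotone {Δ S : Type*} [MeasurableSpace Δ] [MeasurableSpace S]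
    (P : Measure Δ) [IsProbabilityMeasure P]
    (xA : S) (f : Δ → S) (hf : Measurable f) (g : Δ → ℝ) (hg : Measurable g)
    (hgbdd : ∃ M, ∀ δ, |g δ| ≤ M)
    (up um wp wm : ℝ → ℝ)
    (hupMono : MonotoneOn up (Ici 0)) (hupMaps : MapsTo up (Ici 0) (Ici 0))
    (hupMeas : Measurable up)
    (humMono : MonotoneOn um (Ici 0)) (humMaps : MapsTo um (Ici 0) (Ici 0))
    (humMeas : Measurable um)
    (hwp : IsPWF wp) (hwm : IsPWF wm)
    (J J' : S → ℝ) (hJ : Measurable J) (hJ' : Measurable J')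
    (hJbdd : ∃ M, ∀ x, |J x| ≤ M) (hJ'bdd : ∃ M, ∀ x, |J' x| ≤ M)
    (hint1 : IntegrableOn (fun z =>
      wp ((P ({δ | z < up (max (g δ + J (f δ)) 0)} ∩ {δ | f δ ≠ xA})).toReal)) (Ioi 0))
    (hint2 : IntegrableOn (fun z =>
      wm ((P ({δ | z < um (-(min (g δ + J (f δ)) 0))} ∩ {δ | f δ ≠ xA})).toReal)) (Ioi 0))
    (hint3 : IntegrableOn (fun z =>
      wp ((P ({δ | z < up (max (g δ + J' (f δ)) 0)} ∩ {δ | f δ ≠ xA})).toReal)) (Ioi 0))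
    (hint4 : IntegrableOn (fun z =>
      wm ((P ({δ | z < um (-(min (g δ + J' (f δ)) 0))} ∩ {δ | f δ ≠ xA})).toReal)) (Ioi 0))
    (hle : ∀ x, J x ≤ J' x) :
    HmapTransient P wp wm up um f g xA J ≤ HmapTransient P wp wm up um f g xA J' := by
  have hsum : ∀ δ, g δ + J (f δ) ≤ g δ + J' (f δ) := fun δ => by
    linarith [hle (f δ)]
  have hpos : ∀ a : ℝ, max a 0 ∈ Ici (0:ℝ) := fun a => le_max_right a 0
  have hneg : ∀ a : ℝ, -(min a 0) ∈ Ici (0:ℝ) := fun a =>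
    neg_nonneg.mpr (min_le_right a 0)
  unfold HmapTransient
  refine sub_le_sub ?_ ?_
  · exact weighted_tail_integral_mono P hwp {δ | f δ ≠ xA}
      (fun δ => hupMono (hpos _) (hpos _)
        (max_le_max_right 0 (hsum δ))) hint1 hint3
  · exact weighted_tail_integral_mono P hwm {δ | f δ ≠ xA}
      (fun δ => humMono (hneg _) (hneg _)
        (neg_le_neg (min_le_min_right 0 (hsum δ)))) hint4 hint2
end
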